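/- arXiv:2205.04303 — 5 statements merged into one kernel-verified Lean document; each statement's English description precedes it below -/
import Mathlib

section
/- For every α ∈ ℝ there exists a sequence {g_n} ⊂ D_α with ‖g_n‖_α = 1 for all n such that, setting M_n to be the 2×2 matrix with rows (1, ⟨g_n, S g_n⟩_α) and (⟨S g_n, g_n⟩_α, ‖S g_n‖_α²), each M_n is invertible and the Frobenius norm ‖M_n^{−1}‖_F tends to ∞ as n → ∞. -/
open Filter Topology

noncomputable section

/-- Membership in the Dirichlet-type space `D_α`, described via Taylor coefficients. -/
def MemD (α : ℝ) (a : ℕ → ℂ) : Prop :=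
  Summable (fun k : ℕ => ‖a k‖ ^ 2 * ((k : ℝ) + 1) ^ α)

/-- The norm of `D_α`, on coefficient sequences. -/
def DNorm (α : ℝ) (a : ℕ → ℂ) : ℝ :=
  Real.sqrt (∑' k : ℕ, ‖a k‖ ^ 2 * ((k : ℝ) + 1) ^ α)

/-- The inner product of `D_α`, on coefficient sequences. -/
def Dinner (α : ℝ) (a b : ℕ → ℂ) : ℂ :=
  ∑' k : ℕ, a k * (starRingEnd ℂ) (b k) * ((((k : ℝ) + 1) ^ α : ℝ) : ℂ)

/-- Cauchy product of coefficient sequences (coefficients of the product function). -/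
def mulCoeff (a b : ℕ → ℂ) : ℕ → ℂ :=
  fun k => ∑ i ∈ Finset.range (k + 1), a i * b (k - i)

/-- Coefficient sequence of the constant function `1`. -/
def oneCoeff : ℕ → ℂ := fun k => if k = 0 then 1 else 0

/-- `f` is cyclic for (the shift operator on) `D_α`: there are polynomials `p n` with
`‖p n · f - 1‖_α → 0`. -/
def Cyclic (α : ℝ) (f : ℕ → ℂ) : Prop :=
  ∃ p : ℕ → Polynomial ℂ,
    Tendsto (fun n => DNorm α (fun k => mulCoeff (p n).coeff f k - oneCoeff k)) atTop (𝓝 0)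

/-- Coefficients of `S^t f`, where `S` is the shift operator `(Sf)(z) = z f(z)`. -/
def shiftPow (t : ℕ) (a : ℕ → ℂ) : ℕ → ℂ :=
  fun k => if k < t then 0 else a (k - t)

/-- Operator norm of `S^t` on `D_α`. -/
def shiftOpNorm (α : ℝ) (t : ℕ) : ℝ :=
  sSup {r : ℝ | ∃ a : ℕ → ℂ, MemD α a ∧ DNorm α a ≤ 1 ∧ r = DNorm α (shiftPow t a)}

/-- `p` is a `d`-th optimal polynomial approximant to `1/f` in `D_α`. -/
def IsOPA (α : ℝ) (f : ℕ → ℂ) (d : ℕ) (p : Polynomial ℂ) : Prop :=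
  p.natDegree ≤ d ∧
    ∀ q : Polynomial ℂ, q.natDegree ≤ d →
      DNorm α (fun k => mulCoeff p.coeff f k - oneCoeff k) ≤
        DNorm α (fun k => mulCoeff q.coeff f k - oneCoeff k)

/-- The matrix `M` of the linear system determining the `d`-th o.p.a. to `1/f`:
`m_{j,k} = ⟨S^k f, S^j f⟩_α`. -/
def opaMatrix (α : ℝ) (d : ℕ) (f : ℕ → ℂ) : Matrix (Fin (d + 1)) (Fin (d + 1)) ℂ :=
  Matrix.of fun j k => Dinner α (shiftPow (k : ℕ) f) (shiftPow (j : ℕ) f)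

/-- The vector `b` of the linear system determining the `d`-th o.p.a. to `1/f`:
`b_j = ⟨1, S^j f⟩_α`. -/
def opaVec (α : ℝ) (d : ℕ) (f : ℕ → ℂ) : Fin (d + 1) → ℂ :=
  fun j => Dinner α oneCoeff (shiftPow (j : ℕ) f)

/-- Frobenius norm of a complex matrix. -/
def frobNorm {m n : ℕ} (M : Matrix (Fin m) (Fin n) ℂ) : ℝ :=
  Real.sqrt (∑ j, ∑ k, ‖M j k‖ ^ 2)

/-- Euclidean norm on `ℂ^m`. -/
def euclNorm {m : ℕ} (v : Fin m → ℂ) : ℝ :=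
  Real.sqrt (∑ j, ‖v j‖ ^ 2)

/-- `α`-weighted Frobenius norm: the Frobenius norm of the matrix in the orthonormal
basis `{z^k/(k+1)^{α/2}}` of the map whose matrix in `{z^k}` is `M`. -/
def wFrobNorm (α : ℝ) {m : ℕ} (M : Matrix (Fin m) (Fin m) ℂ) : ℝ :=
  Real.sqrt (∑ j, ∑ k, ‖M j k‖ ^ 2 * (((j : ℕ) : ℝ) + 1) ^ α * (((k : ℕ) : ℝ) + 1) ^ (-α))

/-- Coefficients of the reproducing kernel of `D_α` at `w ∈ 𝔻`. -/
def kern (α : ℝ) (w : ℂ) : ℕ → ℂ :=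
  fun k => (starRingEnd ℂ) w ^ k / ((((k : ℝ) + 1) ^ α : ℝ) : ℂ)

/-- The `2×2` matrix of the linear system determining the degree-1 o.p.a. to `1/g`. -/
def opaMat2 (α : ℝ) (g : ℕ → ℂ) : Matrix (Fin 2) (Fin 2) ℂ :=
  !![1, Dinner α g (shiftPow 1 g);
     Dinner α (shiftPow 1 g) g, ((DNorm α (shiftPow 1 g) ^ 2 : ℝ) : ℂ)]

/-- Constant coefficient `c` on a finite set. -/
def blk (c : ℝ) (s : Finset ℕ) : ℕ → ℂ := fun k => if k ∈ s then (c : ℂ) else 0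

theorem blk_mem (α c : ℝ) (s : Finset ℕ) : MemD α (blk c s) := by
  unfold MemD
  apply summable_of_ne_finset_zero (s := s)
  intro k hk
  simp [blk, hk]

theorem blk_normsq (α c : ℝ) (s : Finset ℕ) :
    DNorm α (blk c s) ^ 2 = c ^ 2 * ∑ k ∈ s, ((k : ℝ) + 1) ^ α := by
  unfold DNorm
  rw [Real.sq_sqrt (tsum_nonneg fun k => by positivity),
    tsum_eq_sum (s := s) (by intro k hk; simp [blk, hk]), Finset.mul_sum]
  apply Finset.sum_congr rfl
  intro k hk
  simp [blk, hk]

theorem blk_inner (α c : ℝ) (s t : Finset ℕ) :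
    Dinner α (blk c s) (blk c t) = ((c ^ 2 * ∑ k ∈ s ∩ t, ((k : ℝ) + 1) ^ α : ℝ) : ℂ) := by
  unfold Dinner
  rw [tsum_eq_sum (s := s ∩ t), Finset.mul_sum, Complex.ofReal_sum]
  · apply Finset.sum_congr rfl
    intro k hk
    have := Finset.mem_inter.1 hk
    simp [blk, this.1, this.2, sq]
  · intro k hk
    by_cases h : k ∈ s
    · have h2 : k ∉ t := fun h2 => hk (Finset.mem_inter.2 ⟨h, h2⟩)
      simp [blk, h2]
    · simp [blk, h]

theorem blk_shift (c : ℝ) (p q : ℕ) :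
    shiftPow 1 (blk c (Finset.Ico p q)) = blk c (Finset.Ico (p + 1) (q + 1)) := by
  funext k
  unfold shiftPow blk
  rcases k with _ | k
  · simp
  · simp

/-- The weights on a dyadic block are comparable. -/
theorem weight_cmp (α N t u : ℝ) (hN : 0 < N) (ht : N ≤ t) (ht2 : t ≤ 2 * N)
    (hu : N ≤ u) (hu2 : u ≤ 2 * N) : t ^ α ≤ 2 ^ |α| * u ^ α := by
  have t0 : 0 < t := by linarith
  have u0 : 0 < u := by linarith
  rcases le_total 0 α with h | h
  · rw [abs_of_nonneg h, ← Real.mul_rpow (by norm_num) u0.le]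
    exact Real.rpow_le_rpow t0.le (by linarith) h
  · rw [abs_of_nonpos h, Real.rpow_neg (by norm_num), ← Real.inv_rpow (by norm_num),
      ← Real.mul_rpow (by norm_num) u0.le]
    exact Real.rpow_le_rpow_of_nonpos (by positivity) (by linarith) h

theorem blk_key (α : ℝ) (n : ℕ) : ∃ g : ℕ → ℂ, MemD α g ∧ DNorm α g = 1 ∧
    IsUnit (opaMat2 α g) ∧ ((n : ℝ) + 1) / (2 * 2 ^ |α|) ≤ frobNorm (opaMat2 α g)⁻¹ := by
  set w : ℕ → ℝ := fun k => ((k : ℝ) + 1) ^ α with hw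
  have wpos : ∀ k, 0 < w k := fun k => by simp only [hw]; positivity
  set W : ℝ := ∑ k ∈ Finset.Ico n (2 * n + 1), w k with hW
  set C : ℝ := 2 ^ |α| with hC
  have Cpos : 0 < C := by positivity
  have Wpos : 0 < W := Finset.sum_pos (fun k _ => wpos k) ⟨n, by simp; omega⟩
  have hbound : ∀ j, n ≤ j → j ≤ 2 * n + 1 → ((n : ℝ) + 1) * w j ≤ C * W := by
    intro j h1 h2
    have hcard : ((n : ℝ) + 1) * w j = ∑ k ∈ Finset.Ico n (2 * n + 1), w j := by
      rw [Finset.sum_const, Nat.card_Ico, nsmul_eq_mul,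
        show 2 * n + 1 - n = n + 1 by omega]
      push_cast; ring
    rw [hcard, hW, Finset.mul_sum]
    apply Finset.sum_le_sum
    intro k hk
    rw [Finset.mem_Ico] at hk
    have a1 : (n : ℝ) ≤ j := by exact_mod_cast h1
    have a2 : (j : ℝ) ≤ 2 * n + 1 := by exact_mod_cast h2
    have a3 : (n : ℝ) ≤ k := by exact_mod_cast hk.1
    have a4 : (k : ℝ) < 2 * n + 1 := by exact_mod_cast hk.2
    exact weight_cmp α (n + 1) _ _ (by positivity) (by linarith) (by linarith)
      (by linarith) (by linarith)
  set c : ℝ := (Real.sqrt W)⁻¹ with hc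
  have c2 : c ^ 2 = W⁻¹ := by rw [hc, inv_pow, Real.sq_sqrt Wpos.le]
  set x : ℝ := w n / W with hx
  set y : ℝ := w (2 * n + 1) / W with hy
  have x0 : 0 < x := div_pos (wpos _) Wpos
  have y0 : 0 < y := div_pos (wpos _) Wpos
  have x1 : x ≤ 1 := by
    rw [hx, div_le_one Wpos, hW]
    exact Finset.single_le_sum (fun k _ => (wpos k).le) (by simp; omega)
  have np : (0 : ℝ) < (n : ℝ) + 1 := by positivity
  have xb : x ≤ C / ((n : ℝ) + 1) := by
    rw [hx, div_le_div_iff₀ Wpos np]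
    linarith [hbound n le_rfl (by omega)]
  have yb : y ≤ C / ((n : ℝ) + 1) := by
    rw [hy, div_le_div_iff₀ Wpos np]
    linarith [hbound (2 * n + 1) (by omega) le_rfl]
  have S1 : ∑ k ∈ Finset.Ico (n + 1) (2 * n + 1), w k = W - w n := by
    have h := Finset.sum_eq_sum_Ico_succ_bot (show n < 2 * n + 1 by omega) w
    rw [hW, h]; ring
  have S2 : ∑ k ∈ Finset.Ico (n + 1) (2 * n + 1 + 1), w k = W - w n + w (2 * n + 1) := by
    rw [Finset.sum_Ico_succ_top (by omega), S1]
  have I1 : Finset.Ico n (2 * n + 1) ∩ Finset.Ico (n + 1) (2 * n + 1 + 1)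
      = Finset.Ico (n + 1) (2 * n + 1) := by
    ext k; simp only [Finset.mem_inter, Finset.mem_Ico]; omega
  have I2 := (Finset.inter_comm _ _).trans I1
  set g := blk c (Finset.Ico n (2 * n + 1)) with hg
  have hM : opaMat2 α g = !![1, ((1 - x : ℝ) : ℂ); ((1 - x : ℝ) : ℂ), ((1 - x + y : ℝ) : ℂ)] := by
    have e1 : c ^ 2 * (W - w n) = 1 - x := by
      rw [c2, hx]; field_simp
    have e2 : c ^ 2 * (W - w n + w (2 * n + 1)) = 1 - x + y := by
      rw [c2, hx, hy]; field_simp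
    unfold opaMat2
    rw [hg, blk_shift, blk_inner, blk_inner, blk_normsq, Finset.inter_comm, I2]
    change !![1, ((c ^ 2 * ∑ k ∈ Finset.Ico (n + 1) (2 * n + 1), w k : ℝ) : ℂ);
      ((c ^ 2 * ∑ k ∈ Finset.Ico (n + 1) (2 * n + 1), w k : ℝ) : ℂ),
      ((c ^ 2 * ∑ k ∈ Finset.Ico (n + 1) (2 * n + 1 + 1), w k : ℝ) : ℂ)] = _
    rw [S2, S1, e1, e2]
  have hdet : (opaMat2 α g).det = ((x + y - x ^ 2 : ℝ) : ℂ) := by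
    rw [hM, Matrix.det_fin_two_of]; push_cast; ring
  have dpos : 0 < x + y - x ^ 2 := by nlinarith
  have dle : x + y - x ^ 2 ≤ 2 * C / ((n : ℝ) + 1) := by
    have : 2 * C / ((n : ℝ) + 1) = C / ((n : ℝ) + 1) + C / ((n : ℝ) + 1) := by ring
    nlinarith
  refine ⟨g, blk_mem _ _ _, ?_, ?_, ?_⟩
  · have h := blk_normsq α c (Finset.Ico n (2 * n + 1))
    have h' : DNorm α g ^ 2 = 1 := by
      rw [hg, h, c2]; exact inv_mul_cancel₀ Wpos.ne'
    have h0 : 0 ≤ DNorm α g := Real.sqrt_nonneg _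
    nlinarith
  · rw [Matrix.isUnit_iff_isUnit_det, hdet, isUnit_iff_ne_zero]
    exact_mod_cast dpos.ne'
  · have hinv : ‖(opaMat2 α g)⁻¹ 1 1‖ = (x + y - x ^ 2)⁻¹ := by
      rw [Matrix.inv_def, hdet, Ring.inverse_eq_inv', Matrix.smul_apply, hM,
        Matrix.adjugate_fin_two_of]
      simp only [Matrix.of_apply, Matrix.cons_val_one, Matrix.cons_val_zero, smul_eq_mul,
        mul_one, Matrix.cons_val_fin_one]
      rw [norm_inv, Complex.norm_real, Real.norm_of_nonneg dpos.le]
    have : (n + 1 : ℝ) / (2 * C) ≤ (x + y - x ^ 2)⁻¹ := by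
      rw [← inv_div]
      exact inv_anti₀ dpos dle
    refine this.trans ?_
    rw [← hinv]
    unfold frobNorm
    apply Real.le_sqrt_of_sq_le
    simp only [Fin.sum_univ_two]
    nlinarith [sq_nonneg ‖(opaMat2 α g)⁻¹ 0 0‖, sq_nonneg ‖(opaMat2 α g)⁻¹ 0 1‖,
      sq_nonneg ‖(opaMat2 α g)⁻¹ 1 0‖]

/-- For every `α`, there are normalized `g_n ∈ D_α` whose degree-1 o.p.a. matrices `M_n`
are invertible and satisfy `‖M_n⁻¹‖_F → ∞`. -/
theorem inverse_matrix_blowup (α : ℝ) :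
    ∃ g : ℕ → ℕ → ℂ,
      (∀ n, MemD α (g n)) ∧ (∀ n, DNorm α (g n) = 1) ∧
      (∀ n, IsUnit (opaMat2 α (g n))) ∧
      Tendsto (fun n => frobNorm (opaMat2 α (g n))⁻¹) atTop atTop := by
  choose g h1 h2 h3 h4 using blk_key α
  refine ⟨g, h1, h2, h3, tendsto_atTop_mono h4 ?_⟩
  apply Tendsto.atTop_div_const (by positivity)
  exact tendsto_atTop_add_const_right _ _ tendsto_natCast_atTop_atTop
end
end

section
/- Let α ∈ ℝ and w ∈ 𝔻, and let k_w denote the reproducing kernel of D_α at w. Then ⟨S k_w, k_w⟩_α = w·‖k_w‖_α². Moreover, if α ≤ 0 and w ∈ (0,1), then ‖S k_w‖_α² ≤ w^{−2}·‖k_w‖_α². Consequently, for the normalized kernel g_w = k_w/‖k_w‖_α one has |⟨S g_w, g_w⟩_α| = |w|, and, when α ≤ 0 and w ∈ (0,1), ‖S g_w‖_α² − |⟨S g_w, g_w⟩_α|² ≤ w^{−2} − w². -/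
open Filter Topology

noncomputable section

lemma pos_weight (α : ℝ) (k : ℕ) : 0 < ((k : ℝ) + 1) ^ α :=
  Real.rpow_pos_of_pos (by positivity) _

lemma kern_term (α : ℝ) (w : ℂ) (k : ℕ) :
    ‖kern α w k‖ ^ 2 * ((k : ℝ) + 1) ^ α = (‖w‖ ^ 2) ^ k / ((k : ℝ) + 1) ^ α := by
  have h := pos_weight α k
  unfold kern
  rw [norm_div, norm_pow, RCLike.norm_conj, Complex.norm_real, Real.norm_of_nonneg h.le]
  field_simp
  ring

lemma kern_summable (α : ℝ) (w : ℂ) (hw : ‖w‖ < 1) :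
    Summable (fun k : ℕ => ‖kern α w k‖ ^ 2 * ((k : ℝ) + 1) ^ α) := by
  simp_rw [kern_term]
  obtain ⟨n, hn⟩ := exists_nat_ge (-α)
  have hq0 : 0 ≤ ‖w‖ ^ 2 := by positivity
  have hq : ‖w‖ ^ 2 < 1 := by nlinarith [norm_nonneg w]
  have h1 : Summable (fun k : ℕ => (k : ℝ) ^ n * (‖w‖ ^ 2) ^ k) :=
    summable_pow_mul_geometric_of_norm_lt_one n (by rwa [Real.norm_of_nonneg hq0])
  have h2 : Summable (fun k : ℕ => (‖w‖ ^ 2) ^ k) := summable_geometric_of_lt_one hq0 hq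
  refine Summable.of_nonneg_of_le (fun k => div_nonneg (by positivity) (pos_weight α k).le)
    (fun k => ?_) ((h1.add h2).mul_left ((2 : ℝ) ^ n))
  have hk1 : (1 : ℝ) ≤ (k : ℝ) + 1 := by linarith [Nat.cast_nonneg (α := ℝ) k]
  have e : (‖w‖ ^ 2) ^ k / ((k : ℝ) + 1) ^ α = ((k : ℝ) + 1) ^ (-α) * (‖w‖ ^ 2) ^ k := by
    rw [Real.rpow_neg (by linarith)]; field_simp
  have h3 : ((k : ℝ) + 1) ^ (-α) ≤ ((k : ℝ) + 1) ^ n := by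
    rw [← Real.rpow_natCast]
    exact Real.rpow_le_rpow_of_exponent_le hk1 hn
  have h4 : ((k : ℝ) + 1) ^ n ≤ 2 ^ n * ((k : ℝ) ^ n + 1) := by
    rcases Nat.eq_zero_or_pos k with rfl | hk
    · have : (1 : ℝ) ≤ 2 ^ n := one_le_pow₀ (by norm_num)
      have h0 : (0 : ℝ) ≤ 0 ^ n := by positivity
      simp
      nlinarith
    · have hk' : (1 : ℝ) ≤ k := by exact_mod_cast hk
      calc ((k : ℝ) + 1) ^ n ≤ (2 * k) ^ n := by gcongr; linarith
        _ = 2 ^ n * (k : ℝ) ^ n := mul_pow _ _ _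
        _ ≤ _ := by gcongr; linarith
  rw [e]
  calc _ ≤ (2 ^ n * ((k : ℝ) ^ n + 1)) * (‖w‖ ^ 2) ^ k := by gcongr; exact h3.trans h4
    _ = _ := by ring

lemma DNorm_sq (α : ℝ) (a : ℕ → ℂ) :
    DNorm α a ^ 2 = ∑' k : ℕ, ‖a k‖ ^ 2 * ((k : ℝ) + 1) ^ α :=
  Real.sq_sqrt (tsum_nonneg fun k => mul_nonneg (by positivity) (pos_weight α k).le)

lemma kern_norm_pos (α : ℝ) (w : ℂ) (hw : ‖w‖ < 1) : 0 < DNorm α (kern α w) := by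
  apply Real.sqrt_pos.2
  refine (kern_summable α w hw).tsum_pos
    (fun k => mul_nonneg (by positivity) (pos_weight α k).le) 0 ?_
  simp [kern]

lemma part_one (α : ℝ) (w : ℂ) (hw : ‖w‖ < 1) :
    Dinner α (shiftPow 1 (kern α w)) (kern α w) = w * ((DNorm α (kern α w) ^ 2 : ℝ) : ℂ) := by
  have hs := (Complex.hasSum_ofReal.2 (kern_summable α w hw).hasSum).mul_left w
  rw [← DNorm_sq] at hs
  have key : ∀ k : ℕ, shiftPow 1 (kern α w) (k + 1) * (starRingEnd ℂ) (kern α w (k + 1)) *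
      (((((k + 1 : ℕ) : ℝ) + 1) ^ α : ℝ) : ℂ)
      = w * ((‖kern α w k‖ ^ 2 * ((k : ℝ) + 1) ^ α : ℝ) : ℂ) := by
    intro k
    rw [kern_term]
    have h0 : ((((k : ℝ) + 1) ^ α : ℝ) : ℂ) ≠ 0 := by
      exact_mod_cast (pos_weight α k).ne'
    have h1 : (((((k + 1 : ℕ) : ℝ) + 1) ^ α : ℝ) : ℂ) ≠ 0 := by
      exact_mod_cast (pos_weight α (k + 1)).ne'
    have e : ((‖w‖ : ℂ)) ^ 2 = (starRingEnd ℂ) w * w := (Complex.conj_mul' w).symm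
    rw [Complex.ofReal_div, Complex.ofReal_pow, Complex.ofReal_pow, e]
    simp only [shiftPow, kern, map_div₀, map_pow, Complex.conj_conj, Complex.conj_ofReal,
      Nat.add_sub_cancel]
    rw [if_neg (by omega)]
    field_simp
    ring
  simp_rw [← key] at hs
  have h := (hasSum_nat_add_iff (f := fun k : ℕ => shiftPow 1 (kern α w) k *
    (starRingEnd ℂ) (kern α w k) * ((((k : ℝ) + 1) ^ α : ℝ) : ℂ)) 1).1 hs
  have h' := h.tsum_eq
  unfold Dinner
  rw [h']
  simp [shiftPow]

lemma part_two (α : ℝ) (w : ℂ) (hw : ‖w‖ < 1) (hα : α ≤ 0) :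
    DNorm α (shiftPow 1 (kern α w)) ^ 2 ≤ DNorm α (kern α w) ^ 2 := by
  have hs := kern_summable α w hw
  rw [DNorm_sq, DNorm_sq]
  have hle : ∀ k : ℕ, ‖shiftPow 1 (kern α w) (k + 1)‖ ^ 2 * (((k + 1 : ℕ) : ℝ) + 1) ^ α
      ≤ ‖kern α w k‖ ^ 2 * ((k : ℝ) + 1) ^ α := by
    intro k
    have : shiftPow 1 (kern α w) (k + 1) = kern α w k := by simp [shiftPow]
    rw [this]
    refine mul_le_mul_of_nonneg_left ?_ (by positivity)
    exact Real.rpow_le_rpow_of_nonpos (by positivity) (by push_cast; linarith) hα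
  have hs1 : Summable (fun k : ℕ =>
      ‖shiftPow 1 (kern α w) (k + 1)‖ ^ 2 * (((k + 1 : ℕ) : ℝ) + 1) ^ α) :=
    Summable.of_nonneg_of_le
      (fun k => mul_nonneg (by positivity) (pos_weight α (k + 1)).le) hle hs
  have hs2 := (summable_nat_add_iff (f := fun k : ℕ =>
      ‖shiftPow 1 (kern α w) k‖ ^ 2 * ((k : ℝ) + 1) ^ α) 1).1 hs1
  rw [hs2.tsum_eq_zero_add]
  have z : ‖shiftPow 1 (kern α w) 0‖ ^ 2 * (((0 : ℕ) : ℝ) + 1) ^ α = 0 := by simp [shiftPow]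
  rw [z, zero_add]
  exact hs1.tsum_le_tsum hle hs

lemma shiftPow_div (t : ℕ) (a : ℕ → ℂ) (c : ℂ) :
    shiftPow t (fun k => a k / c) = fun k => shiftPow t a k / c := by
  funext k
  unfold shiftPow
  split_ifs <;> simp

lemma Dinner_div (α : ℝ) (a b : ℕ → ℂ) (c : ℝ) :
    Dinner α (fun k => a k / (c : ℂ)) (fun k => b k / (c : ℂ)) = Dinner α a b / (c : ℂ) ^ 2 := by
  unfold Dinner
  rw [← tsum_div_const]
  congr 1
  funext k
  rw [map_div₀, Complex.conj_ofReal]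
  ring

lemma DNorm_div (α : ℝ) (a : ℕ → ℂ) (c : ℝ) :
    DNorm α (fun k => a k / (c : ℂ)) ^ 2 = DNorm α a ^ 2 / c ^ 2 := by
  rw [DNorm_sq, DNorm_sq, ← tsum_div_const]
  congr 1
  funext k
  rw [norm_div, div_pow, Complex.norm_real, Real.norm_eq_abs, sq_abs]
  ring

/-- Kernel computations: `⟨S k_w, k_w⟩_α = w ‖k_w‖_α²`; for `α ≤ 0` and `w ∈ (0,1)`,
`‖S k_w‖_α² ≤ w⁻² ‖k_w‖_α²`; for the normalized kernel `g_w`, `|⟨S g_w, g_w⟩_α| = |w|`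
and, when `α ≤ 0`, `w ∈ (0,1)`, `‖S g_w‖_α² - |⟨S g_w, g_w⟩_α|² ≤ w⁻² - w²`. -/
theorem kernel_shift_computations (α : ℝ) (w : ℂ) (hw : ‖w‖ < 1) :
    Dinner α (shiftPow 1 (kern α w)) (kern α w) = w * ((DNorm α (kern α w) ^ 2 : ℝ) : ℂ) ∧
    (α ≤ 0 → w.im = 0 → 0 < w.re → w.re < 1 →
      DNorm α (shiftPow 1 (kern α w)) ^ 2 ≤ ‖w‖⁻¹ ^ 2 * DNorm α (kern α w) ^ 2) ∧
    ‖Dinner α (shiftPow 1 (fun k => kern α w k / ((DNorm α (kern α w) : ℝ) : ℂ)))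
        (fun k => kern α w k / ((DNorm α (kern α w) : ℝ) : ℂ))‖ = ‖w‖ ∧
    (α ≤ 0 → w.im = 0 → 0 < w.re → w.re < 1 →
      DNorm α (shiftPow 1 (fun k => kern α w k / ((DNorm α (kern α w) : ℝ) : ℂ))) ^ 2 -
        ‖Dinner α (shiftPow 1 (fun k => kern α w k / ((DNorm α (kern α w) : ℝ) : ℂ)))
          (fun k => kern α w k / ((DNorm α (kern α w) : ℝ) : ℂ))‖ ^ 2 ≤
        ‖w‖⁻¹ ^ 2 - ‖w‖ ^ 2) := by
  have hN := kern_norm_pos α w hw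
  have h1 := part_one α w hw
  have h3 : ‖Dinner α (shiftPow 1 (fun k => kern α w k / ((DNorm α (kern α w) : ℝ) : ℂ)))
        (fun k => kern α w k / ((DNorm α (kern α w) : ℝ) : ℂ))‖ = ‖w‖ := by
    rw [shiftPow_div, Dinner_div, h1]
    have : ((DNorm α (kern α w) : ℝ) : ℂ) ≠ 0 := by exact_mod_cast hN.ne'
    rw [Complex.ofReal_pow, mul_div_assoc, div_self (pow_ne_zero 2 this), mul_one]
  have hinv : 0 < w.re → 1 ≤ ‖w‖⁻¹ ^ 2 := by
    intro hre
    have hpos : 0 < ‖w‖ := lt_of_lt_of_le hre (Complex.re_le_norm w)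
    exact one_le_pow₀ ((one_le_inv₀ hpos).2 hw.le)
  refine ⟨h1, ?_, h3, ?_⟩
  · intro hα _ hre _
    have := part_two α w hw hα
    nlinarith [hinv hre, sq_nonneg (DNorm α (kern α w))]
  · intro hα _ hre _
    rw [h3, shiftPow_div, DNorm_div]
    have : DNorm α (shiftPow 1 (kern α w)) ^ 2 / DNorm α (kern α w) ^ 2 ≤ 1 :=
      (div_le_one (by positivity)).2 (part_two α w hw hα)
    linarith [hinv hre]
end
end

section
/- For every integer n ≥ 1 and every z in the open unit disc 𝔻, the function g_n(z) = exp(−(1+z)/((1 + 1/n) − z)) satisfies e^{−2n} ≤ |g_n(z)| < 1. -/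
open Filter Topology

noncomputable section

/-- For `n ≥ 1` and `z ∈ 𝔻`, `e^{-2n} ≤ |exp(-(1+z)/((1+1/n) - z))| < 1`. -/
theorem singular_inner_perturbation_bounds (n : ℕ) (hn : 1 ≤ n) (z : ℂ) (hz : ‖z‖ < 1) :
    Real.exp (-(2 * (n : ℝ))) ≤
      ‖Complex.exp (-((1 + z) / ((1 + 1 / (n : ℂ)) - z)))‖ ∧
    ‖Complex.exp (-((1 + z) / ((1 + 1 / (n : ℂ)) - z)))‖ < 1 := by
  have hn0 : (0:ℝ) < n := by exact_mod_cast hn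
  have hε : (0:ℝ) < 1 / (n:ℝ) := by positivity
  have hcast : (1 + 1 / (n : ℂ)) = ((1 + 1 / (n:ℝ) : ℝ) : ℂ) := by push_cast; rfl
  rw [hcast, Complex.norm_exp, Complex.neg_re]
  have hne : 1 / (n:ℝ) ≤ ‖((1 + 1 / (n:ℝ) : ℝ) : ℂ) - z‖ := by
    have h1 := norm_sub_norm_le (((1 + 1 / (n:ℝ) : ℝ) : ℂ)) z
    rw [Complex.norm_real, Real.norm_of_nonneg (by positivity)] at h1
    linarith
  constructor
  · apply Real.exp_le_exp.mpr
    apply neg_le_neg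
    refine (Complex.re_le_norm _).trans ?_
    rw [norm_div, div_le_iff₀ (by linarith)]
    have h2 : ‖1 + z‖ ≤ 2 := by
      have := norm_add_le 1 z
      rw [norm_one] at this
      linarith
    calc ‖1 + z‖ ≤ 2 := h2
      _ = 2 * (n:ℝ) * (1 / (n:ℝ)) := by field_simp
      _ ≤ _ := by gcongr
  · rw [Real.exp_lt_one_iff, neg_lt_zero]
    have hpos : 0 < Complex.normSq (((1 + 1 / (n:ℝ) : ℝ) : ℂ) - z) := by
      rw [Complex.normSq_eq_norm_sq]
      have : 0 < ‖((1 + 1 / (n:ℝ) : ℝ) : ℂ) - z‖ := by linarith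
      positivity
    have hz2 : z.re * z.re + z.im * z.im < 1 := by
      rw [← Complex.normSq_apply, Complex.normSq_eq_norm_sq]
      nlinarith [norm_nonneg z]
    have hx : 0 < 1 + z.re := by
      have := neg_le_of_abs_le (Complex.abs_re_le_norm z)
      linarith
    rw [Complex.div_re, ← add_div]
    apply div_pos _ hpos
    simp only [Complex.add_re, Complex.add_im, Complex.sub_re, Complex.sub_im, Complex.one_re,
      Complex.one_im, Complex.ofReal_re, Complex.ofReal_im]
    nlinarith [mul_pos hε hx]
end
end

section
/- Let g(z) = exp(−(1+z)/(1−z)) and, for each integer n ≥ 1, g_n(z) = exp(−(1+z)/((1 + 1/n) − z)). Then g and each g_n are bounded analytic functions on the unit disc 𝔻, hence belong to the space D_0 = H² (their Taylor coefficient sequences are square-summable), and ‖g_n − g‖_0 → 0 as n → ∞, i.e., the Taylor coefficients of g_n converge to those of g in the ℓ² norm. -/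
open Filter Topology

noncomputable section

lemma HasSum.congr_fun' {f g : ℕ → ℂ} {a : ℂ} (h : HasSum g a) (hfg : ∀ k, f k = g k) :
    HasSum f a := by
  have : f = g := funext hfg
  rw [this]; exact h

open MeasureTheory AddCircle in
lemma parseval_r (c : ℕ → ℂ) (f : ℂ → ℂ)
    (hc : ∀ z : ℂ, ‖z‖ < 1 → HasSum (fun k : ℕ => c k * z ^ k) (f z))
    (r : ℝ) (hr0 : 0 ≤ r) (hr1 : r < 1) (G : AddCircle (1:ℝ) → ℝ)
    (hG : Integrable G (haarAddCircle (T := (1:ℝ))))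
    (hfG : ∀ x : AddCircle (1:ℝ), ‖f (r * (toCircle x : ℂ))‖ ^ 2 ≤ G x) (N : ℕ) :
    ∑ k ∈ Finset.range N, (‖c k‖ * r ^ k) ^ 2 ≤ ∫ x, G x ∂(haarAddCircle (T := (1:ℝ))) := by
  have hs : Summable (fun k : ℕ => (c k * (r:ℂ) ^ k) • (fourier (k:ℤ) : C(AddCircle (1:ℝ), ℂ))) := by
    apply Summable.of_norm
    have := (hc (r:ℂ) (by simpa [abs_of_nonneg hr0] using hr1)).summable.norm
    simpa [norm_smul, fourier_norm (T := (1:ℝ))] using this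
  set F := ∑' k : ℕ, (c k * (r:ℂ) ^ k) • (fourier (k:ℤ) : C(AddCircle (1:ℝ), ℂ)) with hF
  have hFs := hs.hasSum
  rw [← hF] at hFs
  have hFx : ∀ x, F x = f (r * (toCircle x : ℂ)) := by
    intro x
    have h1 : HasSum (fun k : ℕ => ((c k * (r:ℂ) ^ k) • (fourier (k:ℤ) : C(AddCircle (1:ℝ), ℂ))) x) (F x) :=
      ContinuousMap.hasSum_apply hFs x
    have h2 := hc (r * (toCircle x : ℂ)) (by
      rw [norm_mul, Circle.norm_coe]; simpa [abs_of_nonneg hr0] using hr1)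
    refine h1.unique ?_
    convert h2 using 2 with k
    simp [fourier_apply, toCircle_nsmul, mul_pow, mul_assoc]
  set L := ContinuousMap.toLp (E := ℂ) 2 (haarAddCircle (T := (1:ℝ))) ℂ with hL
  have hLs : HasSum (fun k : ℕ => (c k * (r:ℂ) ^ k) • (fourierLp (T := (1:ℝ)) 2 (k:ℤ))) (L F) := by
    have := L.hasSum hFs
    simpa only [Function.comp_def, map_smul] using this
  have horth : Orthonormal ℂ (fun k : ℕ => fourierLp (T := (1:ℝ)) 2 (k:ℤ)) :=
    (orthonormal_fourier (T := (1:ℝ))).comp _ Nat.cast_injective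
  have hin : ∀ m : ℕ, inner ℂ (fourierLp (T := (1:ℝ)) 2 (m:ℤ)) (L F) = c m * (r:ℂ) ^ m := by
    intro m
    have h1 := (innerSL ℂ (fourierLp (T := (1:ℝ)) 2 (m:ℤ))).hasSum hLs
    simp only [map_smul, innerSL_apply_apply] at h1
    refine h1.unique ?_
    have h2 := hasSum_ite_eq m (c m * (r:ℂ) ^ m)
    refine HasSum.congr_fun' h2 fun k => ?_
    have h3 := orthonormal_iff_ite.1 horth m k
    rw [h3]
    by_cases h : k = m
    · subst h; simp
    · simp [h, Ne.symm h]
  have hB := horth.sum_inner_products_le (L F) (s := Finset.range N)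
  have hn : ‖L F‖ ^ 2 = ∫ x, ‖F x‖ ^ 2 ∂(haarAddCircle (T := (1:ℝ))) := by
    have e := hasSum_sq_fourierCoeff (T := (1:ℝ)) (L F)
    have H₃ := congr_arg RCLike.re (@L2.inner_def (AddCircle (1:ℝ)) ℂ ℂ _ _ _ _ _ (L F) (L F))
    rw [← integral_re] at H₃
    · simp only [← norm_sq_eq_re_inner] at H₃
      rw [H₃]
      apply integral_congr_ae
      filter_upwards [ContinuousMap.coeFn_toLp (E := ℂ) (p := 2) (𝕜 := ℂ) (haarAddCircle (T := (1:ℝ))) F] with x hx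
      rw [hL, hx]
    · exact L2.integrable_inner _ _
  have hle : ∫ x, ‖F x‖ ^ 2 ∂(haarAddCircle (T := (1:ℝ))) ≤ ∫ x, G x ∂(haarAddCircle (T := (1:ℝ))) := by
    apply integral_mono_of_nonneg
    · exact Eventually.of_forall fun x => by positivity
    · exact hG
    · exact Eventually.of_forall fun x => by
        simp only [hFx]; exact hfG x
  rw [hn] at hB
  refine le_trans (le_of_eq ?_) (hB.trans hle)
  refine Finset.sum_congr rfl fun k _ => ?_
  rw [hin]
  simp [abs_of_nonneg hr0]

open MeasureTheory AddCircle in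
lemma parseval_le (c : ℕ → ℂ) (f : ℂ → ℂ)
    (hc : ∀ z : ℂ, ‖z‖ < 1 → HasSum (fun k : ℕ => c k * z ^ k) (f z))
    (G : AddCircle (1:ℝ) → ℝ)
    (hG : Integrable G (haarAddCircle (T := (1:ℝ))))
    (hfG : ∀ r : ℝ, 0 ≤ r → r < 1 → ∀ x : AddCircle (1:ℝ), ‖f (r * (toCircle x : ℂ))‖ ^ 2 ≤ G x) :
    Summable (fun k => ‖c k‖ ^ 2) ∧
    ∑' k, ‖c k‖ ^ 2 ≤ ∫ x, G x ∂(haarAddCircle (T := (1:ℝ))) := by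
  have key : ∀ N, ∑ k ∈ Finset.range N, ‖c k‖ ^ 2 ≤ ∫ x, G x ∂(haarAddCircle (T := (1:ℝ))) := by
    intro N
    have hcont : Continuous (fun r : ℝ => ∑ k ∈ Finset.range N, (‖c k‖ * r ^ k) ^ 2) := by fun_prop
    have ht : Tendsto (fun r : ℝ => ∑ k ∈ Finset.range N, (‖c k‖ * r ^ k) ^ 2) (𝓝[<] 1)
        (𝓝 (∑ k ∈ Finset.range N, ‖c k‖ ^ 2)) := by
      have := (hcont.tendsto 1).mono_left (nhdsWithin_le_nhds (s := Set.Iio 1))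
      simpa using this
    refine le_of_tendsto ht ?_
    filter_upwards [Ioo_mem_nhdsLT (zero_lt_one (α := ℝ))] with r hr
    exact parseval_r c f hc r hr.1.le hr.2 G hG (hfG r hr.1.le hr.2) N
  exact ⟨summable_of_sum_range_le (fun k => by positivity) key,
    Real.tsum_le_of_sum_range_le (fun k => by positivity) key⟩

lemma den_ne (s : ℝ) (hs : 0 ≤ s) (z : ℂ) (hz : ‖z‖ < 1) : (1 + (s:ℂ)) - z ≠ 0 := by
  intro h
  have h1 : z = ((1 + s : ℝ) : ℂ) := by push_cast; linear_combination -h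
  rw [h1, Complex.norm_real, Real.norm_of_nonneg (by linarith)] at hz
  linarith

lemma re_nonneg_aux (s : ℝ) (hs : 0 ≤ s) (z : ℂ) (hz : ‖z‖ < 1) :
    0 ≤ ((1 + z) / ((1 + (s:ℂ)) - z)).re := by
  have h1 : z.re ^ 2 + z.im ^ 2 < 1 := by
    have := Complex.sq_norm z
    rw [Complex.normSq_apply] at this
    nlinarith [norm_nonneg z]
  have h2 : -1 < z.re := by nlinarith
  rw [Complex.div_re, ← add_div]
  apply div_nonneg _ (Complex.normSq_nonneg _)
  simp
  nlinarith [mul_nonneg hs (by linarith : 0 ≤ 1 + z.re)]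

lemma exp_bd (u : ℂ) (hu : 0 ≤ u.re) : ‖Complex.exp (-u)‖ ≤ 1 := by
  rw [Complex.norm_exp]; simpa using hu

lemma exp_lip (u v : ℂ) (hu : 0 ≤ u.re) (hv : 0 ≤ v.re) :
    ‖Complex.exp (-u) - Complex.exp (-v)‖ ≤ ‖u - v‖ := by
  have hd : ∀ w : ℂ, HasDerivAt (fun w => Complex.exp (-w)) (-Complex.exp (-w)) w := fun w => by
    simpa using (hasDerivAt_neg w).cexp
  have := Convex.norm_image_sub_le_of_norm_deriv_le (𝕜 := ℂ) (f := fun w => Complex.exp (-w))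
    (s := {w : ℂ | 0 ≤ w.re}) (C := 1) (x := v) (y := u)
    (fun w _ => (hd w).differentiableAt)
    (fun w hw => by rw [(hd w).deriv, norm_neg]; exact exp_bd w hw)
    (convex_halfSpace_re_ge 0) hv hu
  simpa using this

lemma diff_bd (n : ℕ) (hn : 1 ≤ n) (r : ℝ) (hr0 : 0 ≤ r) (hr1 : r < 1) (e : ℂ) (he : ‖e‖ = 1) :
    ‖Complex.exp (-((1 + r * e) / ((1 + 1 / (n : ℂ)) - r * e))) -
      Complex.exp (-((1 + r * e) / (1 - r * e)))‖ ≤ 10 / (1 + n * ‖1 - e‖ ^ 2) := by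
  set z : ℂ := r * e with hz
  have hnz : ‖z‖ = r := by simp [hz, he, abs_of_nonneg hr0]
  have hz1 : ‖z‖ < 1 := by rw [hnz]; exact hr1
  have hn' : (0:ℝ) < n := by exact_mod_cast hn
  have hnc : (n : ℂ) ≠ 0 := by exact_mod_cast hn'.ne'
  have hs : (1 / (n:ℂ)) = ((1 / n : ℝ) : ℂ) := by push_cast; rfl
  have d0 : (1 - z) ≠ 0 := by simpa using den_ne 0 le_rfl z hz1
  have dn : (1 + 1 / (n:ℂ)) - z ≠ 0 := by rw [hs]; exact den_ne _ (by positivity) z hz1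
  have r0 : 0 ≤ ((1 + z) / (1 - z)).re := by simpa using re_nonneg_aux 0 le_rfl z hz1
  have rn : 0 ≤ ((1 + z) / ((1 + 1 / (n:ℂ)) - z)).re := by
    rw [hs]; exact re_nonneg_aux _ (by positivity) z hz1
  have b2 := (norm_sub_le (Complex.exp (-((1 + z) / ((1 + 1 / (n : ℂ)) - z)))) (Complex.exp (-((1 + z) / (1 - z))))).trans
    (add_le_add (exp_bd _ rn) (exp_bd _ r0))
  have bl := exp_lip _ _ rn r0
  set D := ‖Complex.exp (-((1 + z) / ((1 + 1 / (n : ℂ)) - z))) - Complex.exp (-((1 + z) / (1 - z)))‖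
  have hre : z.re ≤ 1 := (Complex.re_le_norm z).trans hz1.le
  have hden : ‖1 - z‖ ≤ ‖(1 + 1 / (n:ℂ)) - z‖ := by
    rw [hs]
    refine le_of_sq_le_sq ?_ (norm_nonneg _)
    rw [Complex.sq_norm, Complex.sq_norm, Complex.normSq_apply, Complex.normSq_apply]
    have : (0:ℝ) ≤ 1 / n := by positivity
    simp only [Complex.sub_re, Complex.add_re, Complex.one_re, Complex.ofReal_re, Complex.sub_im, Complex.add_im, Complex.one_im, Complex.ofReal_im]
    nlinarith
  have hp : 0 < ‖1 - z‖ := norm_pos_iff.2 d0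
  have hdiff : n * ‖1 - z‖ ^ 2 * D ≤ 2 := by
    have e1 : (1 + z) / ((1 + 1 / (n : ℂ)) - z) - (1 + z) / (1 - z) =
        - ((1 + z) / (n * ((1 - z) * ((1 + 1 / (n : ℂ)) - z)))) := by
      rw [div_sub_div _ _ dn d0, ← neg_div, div_eq_div_iff (mul_ne_zero dn d0) (mul_ne_zero hnc (mul_ne_zero d0 dn))]
      have : (n:ℂ) * (1 / (n:ℂ)) = 1 := by field_simp
      linear_combination (-(1+z) * (1 - z) * ((1 + 1 / (n : ℂ)) - z)) * this
    rw [e1, norm_neg, norm_div, norm_mul, norm_mul, Complex.norm_natCast] at bl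
    have h3 : ‖1 + z‖ ≤ 2 := (norm_add_le _ _).trans (by rw [norm_one]; linarith)
    calc n * ‖1 - z‖ ^ 2 * D ≤ n * (‖1 - z‖ * ‖(1 + 1 / (n:ℂ)) - z‖) * D := by
          rw [sq]; gcongr
      _ ≤ n * (‖1 - z‖ * ‖(1 + 1 / (n:ℂ)) - z‖) * (‖1 + z‖ / (n * (‖1 - z‖ * ‖(1 + 1 / (n:ℂ)) - z‖))) := by gcongr
      _ = ‖1 + z‖ := by
          have := norm_pos_iff.2 dn
          exact mul_div_cancel₀ _ (by positivity)
      _ ≤ 2 := h3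
  have hd : ‖1 - e‖ ≤ 2 * ‖1 - z‖ := by
    have h4 : 1 - e = (1 - z) - ((1 - r : ℝ) : ℂ) * e := by rw [hz]; push_cast; ring
    have h5 : 1 - r ≤ ‖1 - z‖ := by
      have := norm_sub_norm_le (1:ℂ) z
      rw [norm_one, hnz] at this; exact this
    calc ‖1 - e‖ ≤ ‖1 - z‖ + ‖((1 - r : ℝ) : ℂ) * e‖ := by rw [h4]; exact norm_sub_le _ _
      _ = ‖1 - z‖ + (1 - r) := by rw [norm_mul, he, Complex.norm_real, Real.norm_of_nonneg (by linarith), mul_one]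
      _ ≤ _ := by linarith
  have hd2 : ‖1 - e‖ ^ 2 ≤ 4 * ‖1 - z‖ ^ 2 := by
    calc ‖1 - e‖ ^ 2 ≤ (2 * ‖1 - z‖) ^ 2 := by gcongr
      _ = _ := by ring
  have hD0 : 0 ≤ D := norm_nonneg _
  rw [le_div_iff₀ (by positivity)]
  have : (n:ℝ) * ‖1 - e‖ ^ 2 * D ≤ n * (4 * ‖1 - z‖ ^ 2) * D := by gcongr
  nlinarith

open MeasureTheory AddCircle in
lemma integral_tendsto :
    Tendsto (fun n : ℕ => ∫ x, (10 / (1 + n * ‖1 - (toCircle x : ℂ)‖ ^ 2)) ^ 2 ∂(haarAddCircle (T := (1:ℝ))))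
      atTop (𝓝 0) := by
  have h0 : (0:ℝ) = ∫ x, (0:ℝ) ∂(haarAddCircle (T := (1:ℝ))) := by simp
  rw [h0]
  apply tendsto_integral_of_dominated_convergence (fun _ => 100)
  · intro n
    apply Continuous.aestronglyMeasurable
    refine (Continuous.div (by fun_prop) (by fun_prop) (fun x => by positivity)).pow 2
  · exact integrable_const _
  · intro n
    refine Eventually.of_forall fun x => ?_
    rw [Real.norm_of_nonneg (by positivity)]
    have : 10 / (1 + (n:ℝ) * ‖1 - (toCircle x : ℂ)‖ ^ 2) ≤ 10 := by
      apply div_le_self (by norm_num)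
      have : 0 ≤ (n:ℝ) * ‖1 - (toCircle x : ℂ)‖ ^ 2 := by positivity
      linarith
    calc _ ≤ (10:ℝ) ^ 2 := by gcongr
      _ = 100 := by norm_num
  · have hna : (haarAddCircle (T := (1:ℝ))) {0} = 0 := by
      have h : (volume : Measure (AddCircle (1:ℝ))) = haarAddCircle := by
        rw [volume_eq_smul_haarAddCircle]; simp
      rw [← h, ← Metric.closedBall_zero, AddCircle.volume_closedBall]
      simp
    have hae : ∀ᵐ x ∂(haarAddCircle (T := (1:ℝ))), x ≠ 0 := by
      rw [ae_iff]; simpa using hna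
    filter_upwards [hae] with x hx
    have hd : 0 < ‖1 - (toCircle x : ℂ)‖ ^ 2 := by
      have : 1 - (toCircle x : ℂ) ≠ 0 := by
        intro h
        apply hx
        apply injective_toCircle (one_ne_zero (α := ℝ))
        apply Circle.ext
        rw [toCircle_zero, Circle.coe_one]
        linear_combination -h
      have := norm_pos_iff.2 this
      positivity
    have h1 : Tendsto (fun n : ℕ => 1 + (n:ℝ) * ‖1 - (toCircle x : ℂ)‖ ^ 2) atTop atTop :=
      tendsto_atTop_add_const_left _ _ (tendsto_natCast_atTop_atTop.atTop_mul_const hd)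
    simpa using (h1.const_div_atTop 10).pow 2

lemma taylor_exists (f : ℂ → ℂ) (hf : DifferentiableOn ℂ f (Metric.ball 0 1)) :
    ∃ c : ℕ → ℂ, ∀ z : ℂ, ‖z‖ < 1 → HasSum (fun k : ℕ => c k * z ^ k) (f z) := by
  refine ⟨fun k => (k.factorial : ℂ)⁻¹ * iteratedDeriv k f 0, fun z hz => ?_⟩
  have := Complex.hasSum_taylorSeries_on_ball hf (z := z) (by simpa using hz)
  refine HasSum.congr_fun' this fun k => ?_
  simp only [sub_zero, smul_eq_mul]; ring

/-- The singular inner function `g(z) = exp(-(1+z)/(1-z))` and its perturbations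
`g_n(z) = exp(-(1+z)/((1+1/n) - z))` are bounded analytic functions on `𝔻`, belong to
`H² = D_0` (square-summable Taylor coefficients), and `‖g_n - g‖_0 → 0`. -/
theorem singular_inner_H2_convergence :
    (∃ B : ℝ, ∀ z : ℂ, ‖z‖ < 1 → ‖Complex.exp (-((1 + z) / (1 - z)))‖ ≤ B) ∧
    (∀ n : ℕ, 1 ≤ n → ∃ B : ℝ, ∀ z : ℂ, ‖z‖ < 1 →
      ‖Complex.exp (-((1 + z) / ((1 + 1 / (n : ℂ)) - z)))‖ ≤ B) ∧
    DifferentiableOn ℂ (fun z : ℂ => Complex.exp (-((1 + z) / (1 - z))))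
      (Metric.ball 0 1) ∧
    (∀ n : ℕ, 1 ≤ n →
      DifferentiableOn ℂ (fun z : ℂ => Complex.exp (-((1 + z) / ((1 + 1 / (n : ℂ)) - z))))
        (Metric.ball 0 1)) ∧
    ∃ a : ℕ → ℂ, ∃ b : ℕ → ℕ → ℂ,
      (∀ z : ℂ, ‖z‖ < 1 →
        HasSum (fun k : ℕ => a k * z ^ k) (Complex.exp (-((1 + z) / (1 - z))))) ∧
      (∀ n : ℕ, 1 ≤ n → ∀ z : ℂ, ‖z‖ < 1 →
        HasSum (fun k : ℕ => b n k * z ^ k)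
          (Complex.exp (-((1 + z) / ((1 + 1 / (n : ℂ)) - z))))) ∧
      Summable (fun k : ℕ => ‖a k‖ ^ 2) ∧
      (∀ n : ℕ, 1 ≤ n → Summable (fun k : ℕ => ‖b n k‖ ^ 2)) ∧
      Tendsto (fun n : ℕ => Real.sqrt (∑' k : ℕ, ‖b n k - a k‖ ^ 2)) atTop (𝓝 0) := by
  have hs : ∀ n : ℕ, (1 / (n:ℂ)) = ((1 / n : ℝ) : ℂ) := fun n => by push_cast; rfl
  have b0 : ∀ z : ℂ, ‖z‖ < 1 → ‖Complex.exp (-((1 + z) / (1 - z)))‖ ≤ 1 := fun z hz =>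
    exp_bd _ (by simpa using re_nonneg_aux 0 le_rfl z hz)
  have bn : ∀ n : ℕ, ∀ z : ℂ, ‖z‖ < 1 →
      ‖Complex.exp (-((1 + z) / ((1 + 1 / (n : ℂ)) - z)))‖ ≤ 1 := fun n z hz =>
    exp_bd _ (by rw [hs]; exact re_nonneg_aux _ (by positivity) z hz)
  have d0 : DifferentiableOn ℂ (fun z : ℂ => Complex.exp (-((1 + z) / (1 - z))))
      (Metric.ball 0 1) := by
    intro z hz
    have : 1 - z ≠ 0 := by simpa using den_ne 0 le_rfl z (by simpa using hz)
    exact DifferentiableAt.differentiableWithinAt (by fun_prop (disch := assumption))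
  have dn : ∀ n : ℕ, DifferentiableOn ℂ
      (fun z : ℂ => Complex.exp (-((1 + z) / ((1 + 1 / (n : ℂ)) - z)))) (Metric.ball 0 1) := by
    intro n z hz
    have : (1 + 1 / (n:ℂ)) - z ≠ 0 := by
      rw [hs]; exact den_ne _ (by positivity) z (by simpa using hz)
    exact DifferentiableAt.differentiableWithinAt (by fun_prop (disch := assumption))
  refine ⟨⟨1, b0⟩, fun n _ => ⟨1, bn n⟩, d0, fun n _ => dn n, ?_⟩
  obtain ⟨a, ha⟩ := taylor_exists _ d0
  choose b hb using fun n => taylor_exists _ (dn n)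
  have hnorm : ∀ r : ℝ, 0 ≤ r → r < 1 → ∀ x : AddCircle (1:ℝ),
      ‖(r : ℂ) * (AddCircle.toCircle x : ℂ)‖ < 1 := fun r h0 h1 x => by
    rw [norm_mul, Circle.norm_coe]; simpa [abs_of_nonneg h0] using h1
  refine ⟨a, b, ha, fun n _ => hb n, ?_, fun n _ => ?_, ?_⟩
  · exact (parseval_le a _ ha (fun _ => 1) (MeasureTheory.integrable_const _)
      (fun r h0 h1 x => pow_le_one₀ (norm_nonneg _) (b0 _ (hnorm r h0 h1 x)))).1
  · exact (parseval_le (b n) _ (hb n) (fun _ => 1) (MeasureTheory.integrable_const _)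
      (fun r h0 h1 x => pow_le_one₀ (norm_nonneg _) (bn n _ (hnorm r h0 h1 x)))).1
  · have hT : Tendsto (fun n : ℕ => ∑' k : ℕ, ‖b n k - a k‖ ^ 2) atTop (𝓝 0) := by
      refine tendsto_of_tendsto_of_tendsto_of_le_of_le' tendsto_const_nhds integral_tendsto
        (Eventually.of_forall fun n => tsum_nonneg fun k => by positivity) ?_
      filter_upwards [eventually_ge_atTop 1] with n hn
      refine (parseval_le (fun k => b n k - a k) (fun z =>
        Complex.exp (-((1 + z) / ((1 + 1 / (n : ℂ)) - z))) - Complex.exp (-((1 + z) / (1 - z))))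
        (fun z hz => ?_) _ ?_ (fun r h0 h1 x => ?_)).2
      · simpa only [sub_mul] using (hb n z hz).sub (ha z hz)
      · have hc : Continuous (fun x : AddCircle (1:ℝ) =>
            (10 / (1 + (n:ℝ) * ‖1 - (AddCircle.toCircle x : ℂ)‖ ^ 2)) ^ 2) :=
          (Continuous.div (by fun_prop) (by fun_prop) (fun x => by positivity)).pow 2
        exact hc.integrable_of_hasCompactSupport (HasCompactSupport.of_compactSpace _)
      · exact pow_le_pow_left₀ (norm_nonneg _) (diff_bd n hn r h0 h1 _ (Circle.norm_coe _)) 2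
    simpa using hT.sqrt
end
end

section
/- Let ε ∈ (0,1), set r = (1−ε)/2, and let E_ε = { Σ_{n=1}^∞ ω_n·((1+ε)/2)·r^{n−1} : ω ∈ {0,1}^ℕ } ⊂ [0,1] be the middle-ε Cantor set. If 0 < α < 1 and α > 1 − log 2 / log(2/(1−ε)), then E_ε has positive α-Riesz capacity: there exists a Borel probability measure μ on ℝ with μ(E_ε) = 1 and finite α-Riesz energy, ∫∫ |x−y|^{α−1} dμ(x) dμ(y) < ∞. -/
open Filter Topology MeasureTheory

noncomputable section

/-- The middle-`ε` Cantor set on `[0,1]`: the set of sums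
`Σ_{n≥1} ω_n ((1+ε)/2) r^{n-1}` with `r = (1-ε)/2` and `ω ∈ {0,1}^ℕ`. -/
def cantorMidSet (ε : ℝ) : Set ℝ :=
  {x | ∃ ω : ℕ → Bool,
    x = ∑' n : ℕ, (if ω n then ((1 + ε) / 2) * ((1 - ε) / 2) ^ n else 0)}

/-- The coding map. -/
def codeMap (ε : ℝ) (ω : ℕ → Bool) : ℝ :=
  ∑' n : ℕ, (if ω n then ((1 + ε) / 2) * ((1 - ε) / 2) ^ n else 0)

/-- The fair coin. -/
def coin : Measure Bool := (PMF.uniformOfFintype Bool).toMeasure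

instance : IsProbabilityMeasure coin := by unfold coin; infer_instance

/-- Fair coin tossing measure. -/
def coins : Measure (ℕ → Bool) := Measure.infinitePi (fun _ : ℕ => coin)

instance : IsProbabilityMeasure coins := by unfold coins; infer_instance

lemma coin_singleton (b : Bool) : coin {b} = 2⁻¹ := by
  unfold coin
  rw [PMF.toMeasure_apply_singleton _ _ (measurableSet_singleton _)]
  simp

lemma coins_cyl (ω : ℕ → Bool) (n : ℕ) :
    coins (Set.pi (Finset.range n : Set ℕ) (fun i => {ω i})) = 2⁻¹ ^ n := by
  unfold coins
  rw [Measure.infinitePi_pi _ (fun i _ => measurableSet_singleton _)]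
  simp [coin_singleton]

lemma summable_bound (ε : ℝ) (hε : 0 < ε) (hε1 : ε < 1) :
    Summable (fun n : ℕ => ((1 + ε) / 2) * ((1 - ε) / 2) ^ n) :=
  (summable_geometric_of_lt_one (by linarith) (by linarith)).mul_left _

lemma term_nonneg (ε : ℝ) (hε : 0 < ε) (hε1 : ε < 1) (ω : ℕ → Bool) (n : ℕ) :
    0 ≤ (if ω n then ((1 + ε) / 2) * ((1 - ε) / 2) ^ n else 0) := by
  have h : 0 < (1 - ε) / 2 := by linarith
  split_ifs <;> positivity

lemma term_le (ε : ℝ) (hε : 0 < ε) (hε1 : ε < 1) (ω : ℕ → Bool) (n : ℕ) :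
    (if ω n then ((1 + ε) / 2) * ((1 - ε) / 2) ^ n else 0)
      ≤ ((1 + ε) / 2) * ((1 - ε) / 2) ^ n := by
  have h : 0 < (1 - ε) / 2 := by linarith
  split_ifs
  · exact le_rfl
  · positivity

lemma summable_term (ε : ℝ) (hε : 0 < ε) (hε1 : ε < 1) (ω : ℕ → Bool) :
    Summable (fun n : ℕ => if ω n then ((1 + ε) / 2) * ((1 - ε) / 2) ^ n else 0) :=
  Summable.of_nonneg_of_le (term_nonneg ε hε hε1 ω) (term_le ε hε hε1 ω)
    (summable_bound ε hε hε1)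

lemma codeMap_continuous (ε : ℝ) (hε : 0 < ε) (hε1 : ε < 1) : Continuous (codeMap ε) := by
  unfold codeMap
  refine continuous_tsum (fun n => ?_) (summable_bound ε hε hε1) (fun n ω => ?_)
  · have : Continuous (fun b : Bool =>
        (if b then ((1 + ε) / 2) * ((1 - ε) / 2) ^ n else (0 : ℝ))) :=
      continuous_of_discreteTopology
    exact this.comp (continuous_apply n)
  · rw [Real.norm_of_nonneg (term_nonneg ε hε hε1 ω n)]
    exact term_le ε hε hε1 ω n

lemma tail_eq (ε : ℝ) (hε : 0 < ε) (hε1 : ε < 1) (n : ℕ) :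
    ∑' i : ℕ, ((1 + ε) / 2) * ((1 - ε) / 2) ^ (i + (n + 1))
    = ((1 - ε) / 2) ^ (n + 1) := by
  have : ∀ i : ℕ, ((1 + ε) / 2) * ((1 - ε) / 2) ^ (i + (n + 1))
      = (((1 + ε) / 2) * ((1 - ε) / 2) ^ (n + 1)) * ((1 - ε) / 2) ^ i := by
    intro i; ring
  simp_rw [this]
  rw [tsum_mul_left, tsum_geometric_of_lt_one (by linarith) (by linarith)]
  have h : 1 - (1 - ε) / 2 = (1 + ε) / 2 := by ring
  have h' : (1 + ε) / 2 ≠ 0 := by positivity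
  rw [h, mul_comm ((1 + ε) / 2), mul_assoc, mul_inv_cancel₀ h', mul_one]

lemma tsum_sep (a b c : ℕ → ℝ) (m : ℕ) (n : ℕ) (hm : m = n + 1)
    (sa : Summable a) (sb : Summable b) (sc : Summable c)
    (ha : ∀ i, 0 ≤ a i) (hbc : ∀ i, b i ≤ c i) (hlt : ∀ i < n, b i = a i) (hb : b n = 0) :
    a n - ∑' i, c (i + m) ≤ ∑' i, a i - ∑' i, b i := by
  have e : ∑ i ∈ Finset.range n, b i = ∑ i ∈ Finset.range n, a i :=
    Finset.sum_congr rfl (fun i hi => hlt i (Finset.mem_range.1 hi))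
  have t1 : 0 ≤ ∑' i, a (i + m) := tsum_nonneg (fun i => ha _)
  have t2 : ∑' i, b (i + m) ≤ ∑' i, c (i + m) :=
    Summable.tsum_le_tsum (fun i => hbc _)
      ((summable_nat_add_iff m).2 sb) ((summable_nat_add_iff m).2 sc)
  have u1 := sa.sum_add_tsum_nat_add m
  have u2 := sb.sum_add_tsum_nat_add m
  have v1 : ∑ i ∈ Finset.range m, a i = ∑ i ∈ Finset.range n, a i + a n := by
    rw [hm, Finset.sum_range_succ]
  have v2 : ∑ i ∈ Finset.range m, b i = ∑ i ∈ Finset.range n, b i + b n := by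
    rw [hm, Finset.sum_range_succ]
  linarith

lemma separation_aux (ε : ℝ) (hε : 0 < ε) (hε1 : ε < 1) (ω η : ℕ → Bool) (n : ℕ)
    (hlt : ∀ i < n, η i = ω i) (h1 : ω n = true) (h2 : η n = false) :
    ε * ((1 - ε) / 2) ^ n ≤ codeMap ε ω - codeMap ε η := by
  have key := tsum_sep _ _ _ (n + 1) n rfl (summable_term ε hε hε1 ω)
    (summable_term ε hε hε1 η) (summable_bound ε hε hε1) (term_nonneg ε hε hε1 ω)
    (term_le ε hε hε1 η) (fun i hi => by simp only [hlt i hi]) (by simp [h2])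
  rw [tail_eq ε hε hε1 n, if_pos h1] at key
  have : ((1 + ε) / 2) * ((1 - ε) / 2) ^ n - ((1 - ε) / 2) ^ (n + 1)
      = ε * ((1 - ε) / 2) ^ n := by rw [pow_succ]; ring
  rw [this] at key
  exact key

lemma separation (ε : ℝ) (hε : 0 < ε) (hε1 : ε < 1) (ω η : ℕ → Bool) (n : ℕ)
    (hlt : ∀ i < n, η i = ω i) (h : η n ≠ ω n) :
    ε * ((1 - ε) / 2) ^ n ≤ |codeMap ε ω - codeMap ε η| := by
  cases h1 : ω n
  · have h2 : η n = true := by simpa [h1] using h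
    rw [abs_sub_comm]
    exact (separation_aux ε hε hε1 η ω n (fun i hi => (hlt i hi).symm) h2 h1).trans
      (le_abs_self _)
  · have h2 : η n = false := by simpa [h1] using h
    exact (separation_aux ε hε hε1 ω η n hlt h1 h2).trans (le_abs_self _)

lemma kernel_le (ε α : ℝ) (hε : 0 < ε) (hε1 : ε < 1) (hα1 : α < 1) (ω η : ℕ → Bool) :
    (ENNReal.ofReal |codeMap ε ω - codeMap ε η|) ^ (α - 1) ≤
      ∑' n : ℕ, (Set.pi (Finset.range n : Set ℕ) (fun i => {ω i})).indicator
        (fun _ => (ENNReal.ofReal (ε * ((1 - ε) / 2) ^ n)) ^ (α - 1)) η := by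
  have hr : 0 < (1 - ε) / 2 := by linarith
  by_cases hne : η = ω
  · subst hne
    have hc : ∀ n : ℕ, (1 : ENNReal) ≤
        (Set.pi (Finset.range n : Set ℕ) (fun i => {η i})).indicator
        (fun _ => (ENNReal.ofReal (ε * ((1 - ε) / 2) ^ n)) ^ (α - 1)) η := by
      intro n
      rw [Set.indicator_of_mem (by simp [Set.mem_pi])]
      have : ENNReal.ofReal (ε * ((1 - ε) / 2) ^ n) ≤ 1 := by
        rw [ENNReal.ofReal_le_one]
        exact mul_le_one₀ hε1.le (by positivity) (pow_le_one₀ hr.le (by linarith))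
      exact ENNReal.one_le_rpow_of_pos_of_le_one_of_neg
        (ENNReal.ofReal_pos.2 (by positivity)) this (by linarith)
    have := ENNReal.tsum_le_tsum hc
    rw [ENNReal.tsum_const_eq_top_of_ne_zero one_ne_zero] at this
    exact le_top.trans this
  · have hex : ∃ n, η n ≠ ω n := Function.ne_iff.1 hne
    classical
    let n := Nat.find hex
    have hn : η n ≠ ω n := Nat.find_spec hex
    have hlt : ∀ i < n, η i = ω i := fun i hi => not_not.1 (Nat.find_min hex hi)
    refine le_trans ?_ (ENNReal.le_tsum n)
    rw [Set.indicator_of_mem (by simpa [Set.mem_pi] using hlt)]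
    have hle := ENNReal.ofReal_le_ofReal (separation ε hε hε1 ω η n hlt hn)
    have hneg : α - 1 = -(1 - α) := by ring
    rw [hneg, ENNReal.rpow_neg, ENNReal.rpow_neg]
    exact ENNReal.inv_le_inv.2 (ENNReal.rpow_le_rpow hle (by linarith))

lemma ratio_lt (ε α : ℝ) (hε : 0 < ε) (hε1 : ε < 1)
    (hdim : 1 - Real.log 2 / Real.log (2 / (1 - ε)) < α) :
    ((1 - ε) / 2) ^ (α - 1) < 2 := by
  have hr : 0 < (1 - ε) / 2 := by linarith
  have hL : Real.log (2 / (1 - ε)) = - Real.log ((1 - ε) / 2) := by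
    rw [← Real.log_inv, inv_div]
  have hpos : 0 < Real.log (2 / (1 - ε)) :=
    Real.log_pos (by rw [lt_div_iff₀ (by linarith)]; linarith)
  have h : (1 - α) * Real.log (2 / (1 - ε)) < Real.log 2 := by
    rw [← lt_div_iff₀ hpos]; linarith
  rw [hL] at h
  rw [← Real.log_lt_log_iff (by positivity) (by norm_num), Real.log_rpow hr]
  linarith

lemma bound_finite (ε α : ℝ) (hε : 0 < ε) (hε1 : ε < 1)
    (hdim : 1 - Real.log 2 / Real.log (2 / (1 - ε)) < α) :
    ∑' n : ℕ, (ENNReal.ofReal (ε * ((1 - ε) / 2) ^ n)) ^ (α - 1) * 2⁻¹ ^ n < ⊤ := by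
  have hr : 0 < (1 - ε) / 2 := by linarith
  have hq := ratio_lt ε α hε hε1 hdim
  set q : ℝ := ((1 - ε) / 2) ^ (α - 1) with hqdef
  have hq0 : 0 < q := by positivity
  have : ∀ n : ℕ, (ENNReal.ofReal (ε * ((1 - ε) / 2) ^ n)) ^ (α - 1) * 2⁻¹ ^ n
      = ENNReal.ofReal (ε ^ (α - 1) * (q / 2) ^ n) := by
    intro n
    have h2 : (2⁻¹ : ENNReal) = ENNReal.ofReal (2⁻¹) := by
      rw [ENNReal.ofReal_inv_of_pos (by norm_num)]; simp
    rw [ENNReal.ofReal_rpow_of_pos (by positivity), h2,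
      ← ENNReal.ofReal_pow (by norm_num), ← ENNReal.ofReal_mul (by positivity)]
    congr 1
    rw [Real.mul_rpow hε.le (by positivity), ← Real.rpow_natCast, ← Real.rpow_mul hr.le,
      mul_comm (n : ℝ), Real.rpow_mul hr.le, Real.rpow_natCast, ← hqdef, div_pow, inv_pow]
    ring
  simp_rw [this]
  rw [← ENNReal.ofReal_tsum_of_nonneg (fun n => by positivity)
    ((summable_geometric_of_lt_one (by positivity) (by linarith)).mul_left _)]
  exact ENNReal.ofReal_lt_top

/-- If `0 < α < 1` and `α > 1 - log 2 / log(2/(1-ε))`, the middle-`ε` Cantor set has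
positive `α`-Riesz capacity: it carries a Borel probability measure of finite
`α`-Riesz energy `∫∫ |x-y|^{α-1} dμ(x) dμ(y) < ∞`. -/
theorem cantor_positive_capacity (ε α : ℝ) (hε : 0 < ε) (hε1 : ε < 1)
    (hα0 : 0 < α) (hα1 : α < 1)
    (hdim : 1 - Real.log 2 / Real.log (2 / (1 - ε)) < α) :
    ∃ μ : Measure ℝ, IsProbabilityMeasure μ ∧ μ (cantorMidSet ε) = 1 ∧
      (∫⁻ x, ∫⁻ y, (ENNReal.ofReal |x - y|) ^ (α - 1) ∂μ ∂μ) < ⊤ := by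
  have hm : Measurable (codeMap ε) := (codeMap_continuous ε hε hε1).measurable
  have hP : IsProbabilityMeasure (coins.map (codeMap ε)) :=
    Measure.isProbabilityMeasure_map hm.aemeasurable
  refine ⟨coins.map (codeMap ε), hP, le_antisymm prob_le_one ?_, ?_⟩
  · have h := Measure.le_map_apply (μ := coins) hm.aemeasurable (cantorMidSet ε)
    have hu : codeMap ε ⁻¹' (cantorMidSet ε) = Set.univ :=
      Set.eq_univ_of_forall (fun ω => ⟨ω, rfl⟩)
    rwa [hu, measure_univ] at h
  · have hk : Measurable (fun p : ℝ × ℝ => (ENNReal.ofReal |p.1 - p.2|) ^ (α - 1)) := by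
      have : Measurable (fun p : ℝ × ℝ => |p.1 - p.2|) :=
        (continuous_fst.sub continuous_snd).abs.measurable
      exact this.ennreal_ofReal.pow_const _
    rw [lintegral_map hk.lintegral_prod_right' hm]
    refine lt_of_le_of_lt (lintegral_mono (g := fun _ => ∑' n : ℕ,
      (ENNReal.ofReal (ε * ((1 - ε) / 2) ^ n)) ^ (α - 1) * 2⁻¹ ^ n) (fun ω => ?_)) ?_
    · have hs : ∀ n : ℕ, MeasurableSet
          (Set.pi (Finset.range n : Set ℕ) (fun i => ({ω i} : Set Bool))) :=
        fun n => MeasurableSet.pi (Set.to_countable _) (fun i _ => measurableSet_singleton _)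
      beta_reduce
      have hk' : Measurable (fun y : ℝ => (ENNReal.ofReal |codeMap ε ω - y|) ^ (α - 1)) :=
        hk.comp measurable_prodMk_left
      rw [lintegral_map hk' hm]
      refine (lintegral_mono (fun η => kernel_le ε α hε hε1 hα1 ω η)).trans ?_
      rw [lintegral_tsum (fun n => (measurable_const.indicator (hs n)).aemeasurable)]
      refine ENNReal.tsum_le_tsum (fun n => ?_)
      rw [lintegral_indicator_const (hs n), coins_cyl]
    · rw [lintegral_const, measure_univ, mul_one]
      exact bound_finite ε α hε hε1 hdim
end
end
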